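/- arXiv:2007.03129 — 5 statements merged into one kernel-verified Lean document; each statement's English description precedes it below -/
import Mathlib

section
/- Let (Ω, ℱ, P) be a probability space, γ a finite measurable partition of Ω with P(C) > 0 for every C ∈ γ, and let 𝒜 ⊆ ℬ be sub-σ-algebras of ℱ. If the conditional mutual information I(ℬ; γ | 𝒜) vanishes, then for every C ∈ γ the conditional probabilities agree: P(C | ℬ) = P(C | 𝒜) P-almost everywhere. -/
open MeasureTheory

/-- The conditional probability `P(C | 𝒜)`: the conditional expectation of the
indicator of `C` with respect to the sub-σ-algebra `m`. -/
noncomputable def condProb {Ω : Type*} {m0 : MeasurableSpace Ω} (μ : Measure Ω)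
    (m : MeasurableSpace Ω) (C : Set Ω) : Ω → ℝ :=
  μ[C.indicator (fun _ => (1 : ℝ)) | m]

/-- The mutual information `I(𝒜; γ) = ∑_{C ∈ γ} ∫ P(C|𝒜) log (P(C|𝒜) / P(C)) dP` between a
sub-σ-algebra `m` and a finite measurable partition `γ` (conventions `0 · log 0 = 0`,
`x / 0 = 0`, `log 0 = 0`). -/
noncomputable def mutualInfo {Ω : Type*} {m0 : MeasurableSpace Ω} (μ : Measure Ω)
    (m : MeasurableSpace Ω) (γ : Finset (Set Ω)) : ℝ :=
  ∑ C ∈ γ, ∫ ω, condProb μ m C ω * Real.log (condProb μ m C ω / (μ C).toReal) ∂μ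

/-- The conditional mutual information
`I(ℬ; γ | 𝒜) = ∑_{C ∈ γ} ∫ P(C|ℬ) log (P(C|ℬ) / P(C|𝒜)) dP` (with the same conventions,
so that the integrand is `0` where `P(C|𝒜)` vanishes). -/
noncomputable def condMutualInfo {Ω : Type*} {m0 : MeasurableSpace Ω} (μ : Measure Ω)
    (mA mB : MeasurableSpace Ω) (γ : Finset (Set Ω)) : ℝ :=
  ∑ C ∈ γ, ∫ ω, condProb μ mB C ω *
    Real.log (condProb μ mB C ω / condProb μ mA C ω) ∂μ

open Filter

/-- Bounded `m`-measurable functions integrate equally against `b` and `E[b | m]`. -/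
theorem aux_pull {Ω : Type*} {m m0 : MeasurableSpace Ω} (μ : Measure Ω)
    [IsProbabilityMeasure μ] (hm : m ≤ m0) (a b g : Ω → ℝ) (c : ℝ)
    (hb : Integrable b μ) (hab : μ[b | m] =ᵐ[μ] a)
    (hg : Measurable[m] g) (hc : ∀ x, |g x| ≤ c) :
    ∫ x, g x * b x ∂μ = ∫ x, g x * a x ∂μ := by
  have h := condExp_stronglyMeasurable_mul_of_bound (μ := μ) hm hg.stronglyMeasurable hb c
    (Eventually.of_forall hc)
  have h2 : ∫ x, (μ[g * b | m]) x ∂μ = ∫ x, (g * b) x ∂μ := integral_condExp hm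
  have h3 : ∫ x, (g * b) x ∂μ = ∫ x, g x * b x ∂μ := rfl
  rw [← h3, ← h2]
  apply integral_congr_ae
  filter_upwards [h, hab] with x h1 h2
  rw [h1, Pi.mul_apply, h2]

theorem aux_zero {Ω : Type*} {m m0 : MeasurableSpace Ω} (μ : Measure Ω)
    [IsProbabilityMeasure μ] (hm : m ≤ m0) (a b : Ω → ℝ)
    (hb : Integrable b μ) (hab : μ[b | m] =ᵐ[μ] a) (ham : Measurable[m] a)
    (hb0 : ∀ᵐ x ∂μ, 0 ≤ b x) :
    ∀ᵐ x ∂μ, a x = 0 → b x = 0 := by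
  classical
  set g : Ω → ℝ := fun x => if a x = 0 then 1 else 0 with hgdef
  have hg : Measurable[m] g :=
    Measurable.ite (ham (measurableSet_singleton 0)) measurable_const measurable_const
  have hc : ∀ x, |g x| ≤ 1 := by
    intro x
    simp only [hgdef]
    split_ifs <;> simp
  have h := aux_pull μ hm a b g 1 hb hab hg hc
  have h1 : ∫ x, g x * a x ∂μ = 0 := by
    have : (fun x => g x * a x) = fun _ => 0 := by
      funext x
      simp only [hgdef]
      split_ifs with hx <;> simp [hx]
    rw [this]; simp
  rw [h1] at h
  have hi : Integrable (fun x => g x * b x) μ :=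
    hb.bdd_mul (c := 1) (hg.mono hm le_rfl).aestronglyMeasurable (Eventually.of_forall hc)
  rw [integral_eq_zero_iff_of_nonneg_ae _ hi] at h
  · filter_upwards [h] with x hx hax
    simpa [hgdef, hax] using hx
  · filter_upwards [hb0] with x hx
    simp only [hgdef, Pi.zero_apply]
    split_ifs <;> simp [hx]

theorem aux_int {Ω : Type*} {m m0 : MeasurableSpace Ω} (μ : Measure Ω)
    [IsProbabilityMeasure μ] (hm : m ≤ m0) (a b : Ω → ℝ)
    (hb : Integrable b μ) (hab : μ[b | m] =ᵐ[μ] a) (ham : Measurable[m] a)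
    (hb0 : ∀ᵐ x ∂μ, 0 ≤ b x) (ha0 : ∀ᵐ x ∂μ, 0 ≤ a x) (ha1 : ∀ᵐ x ∂μ, a x ≤ 1) :
    Integrable (fun x => -Real.log (a x) * b x) μ := by
  classical
  have hlm : Measurable[m] (fun x => Real.log (a x)) := Real.measurable_log.comp ham
  let φ : ℕ → Set Ω := fun n => {x | |Real.log (a x)| ≤ n}
  have hφm : ∀ n, MeasurableSet[m] (φ n) := fun n =>
    (measurable_norm.comp hlm) (measurableSet_Iic (a := (n : ℝ)))
  have hφ : AECover μ atTop φ :=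
    { ae_eventually_mem := Eventually.of_forall fun x => by
        obtain ⟨N, hN⟩ := exists_nat_ge |Real.log (a x)|
        filter_upwards [eventually_ge_atTop N] with n hn
        exact hN.trans (by exact_mod_cast hn)
      measurableSet := fun n => hm _ (hφm n) }
  let g : ℕ → Ω → ℝ := fun n => (φ n).indicator (fun x => -Real.log (a x))
  have hg : ∀ n, Measurable[m] (g n) := fun n => hlm.neg.indicator (hφm n)
  have hc : ∀ n x, |g n x| ≤ n := by
    intro n x
    by_cases hx : x ∈ φ n
    · simp only [g, Set.indicator_of_mem hx, abs_neg]; exact hx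
    · simp [g, Set.indicator_of_notMem hx]
  have hind : ∀ n, (φ n).indicator (fun x => -Real.log (a x) * b x) = fun x => g n x * b x := by
    intro n
    funext x
    by_cases hx : x ∈ φ n
    · simp [g, Set.indicator_of_mem hx]
    · simp [g, Set.indicator_of_notMem hx]
  have hgi : ∀ n (f : Ω → ℝ), Integrable f μ → Integrable (fun x => g n x * f x) μ := fun n f hf =>
    hf.bdd_mul (c := n) ((hg n).mono hm le_rfl).aestronglyMeasurable (Eventually.of_forall (hc n))
  have hai : Integrable a μ := integrable_condExp.congr hab
  refine hφ.integrable_of_integral_bounded_of_nonneg_ae 1 ?_ ?_ (Eventually.of_forall ?_)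
  · intro n
    rw [← integrable_indicator_iff (hm _ (hφm n)), hind]
    exact hgi n b hb
  · filter_upwards [hb0, ha0, ha1] with x h1 h2 h3
    exact mul_nonneg (neg_nonneg.2 (Real.log_nonpos h2 h3)) h1
  · intro n
    rw [← integral_indicator (hm _ (hφm n)), hind, aux_pull μ hm a b (g n) n hb hab (hg n) (hc n)]
    calc ∫ x, g n x * a x ∂μ ≤ ∫ _, (1 : ℝ) ∂μ := by
          apply integral_mono_ae (hgi n a hai) (integrable_const _)
          filter_upwards [ha0] with x h
          by_cases hx : x ∈ φ n
          · simp only [g, Set.indicator_of_mem hx]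
            rcases h.eq_or_lt with h | h
            · simp [← h]
            · have := mul_le_mul_of_nonneg_right (Real.one_sub_inv_le_log_of_pos h) h.le
              rw [sub_mul, inv_mul_cancel₀ h.ne'] at this
              linarith
          · simp [g, Set.indicator_of_notMem hx]
      _ = 1 := by simp

theorem aux_ptwise (a b : ℝ) (ha : 0 ≤ a) (hb : 0 ≤ b) (h : a = 0 → b = 0) :
    0 ≤ b * Real.log (b / a) - (b - a) ∧ (b * Real.log (b / a) - (b - a) = 0 → b = a) := by
  rcases ha.eq_or_lt with h0 | ha
  · have := h h0.symm
    subst this; subst h0; simp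
  rcases hb.eq_or_lt with h0 | hb
  · subst h0
    simp [ha.le, eq_comm]
  have e : Real.log (b / a) = -Real.log (a / b) := by rw [← Real.log_inv, inv_div]
  have k : b * (a / b - 1) = a - b := by field_simp
  rw [e]
  constructor
  · have := mul_le_mul_of_nonneg_left (Real.log_le_sub_one_of_pos (div_pos ha hb)) hb.le
    rw [k] at this
    linarith
  · intro hz
    by_contra hne
    have hn1 : a / b ≠ 1 := fun h1 => hne ((div_eq_one_iff_eq hb.ne').1 h1).symm
    have := mul_lt_mul_of_pos_left (Real.log_lt_sub_one_of_pos (div_pos ha hb) hn1) hb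
    rw [k] at this
    linarith

theorem aux_main {Ω : Type*} {m m0 : MeasurableSpace Ω} (μ : Measure Ω)
    [IsProbabilityMeasure μ] (hm : m ≤ m0) (a b : Ω → ℝ)
    (hb : Integrable b μ) (hab : μ[b | m] =ᵐ[μ] a) (ham : Measurable[m] a)
    (hb0 : ∀ᵐ x ∂μ, 0 ≤ b x) (hb1 : ∀ᵐ x ∂μ, b x ≤ 1)
    (ha0 : ∀ᵐ x ∂μ, 0 ≤ a x) (ha1 : ∀ᵐ x ∂μ, a x ≤ 1) :
    0 ≤ ∫ x, b x * Real.log (b x / a x) ∂μ ∧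
      (∫ x, b x * Real.log (b x / a x) ∂μ = 0 → b =ᵐ[μ] a) := by
  have hz := aux_zero μ hm a b hb hab ham hb0
  have hi1 := aux_int μ hm a b hb hab ham hb0 ha0 ha1
  have hai : Integrable a μ := integrable_condExp.congr hab
  have hi2 : Integrable (fun x => b x * Real.log (b x)) μ := by
    refine Integrable.of_bound
      (Real.continuous_mul_log.comp_aestronglyMeasurable hb.aestronglyMeasurable) 1 ?_
    filter_upwards [hb0, hb1] with x h0 h1
    rw [Real.norm_eq_abs, abs_le]
    rcases h0.eq_or_lt with h | h
    · simp [← h]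
    · have := mul_le_mul_of_nonneg_right (Real.one_sub_inv_le_log_of_pos h) h.le
      rw [sub_mul, inv_mul_cancel₀ h.ne'] at this
      have h3 := mul_nonpos_of_nonneg_of_nonpos h0 (Real.log_nonpos h0 h1)
      constructor <;> linarith
  have hi : Integrable (fun x => b x * Real.log (b x / a x)) μ := by
    refine (hi2.add hi1).congr ?_
    filter_upwards [hz] with x hx
    simp only [Pi.add_apply]
    by_cases hbx : b x = 0
    · simp [hbx]
    · rw [Real.log_div hbx (fun h => hbx (hx h))]; ring
  have hint : ∫ x, (b x - a x) ∂μ = 0 := by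
    rw [integral_sub hb hai, ← integral_congr_ae hab, integral_condExp hm, sub_self]
  have hD : Integrable (fun x => b x * Real.log (b x / a x) - (b x - a x)) μ := hi.sub (hb.sub hai)
  have heq : ∫ x, (b x * Real.log (b x / a x) - (b x - a x)) ∂μ
      = ∫ x, b x * Real.log (b x / a x) ∂μ := by
    have h := integral_sub hi (hb.sub hai)
    simp only [Pi.sub_apply] at h
    rw [h, hint, sub_zero]
  have hp : ∀ᵐ x ∂μ, 0 ≤ b x * Real.log (b x / a x) - (b x - a x) := by
    filter_upwards [ha0, hb0, hz] with x h1 h2 h3 using (aux_ptwise _ _ h1 h2 h3).1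
  rw [← heq]
  refine ⟨integral_nonneg_of_ae hp, fun h => ?_⟩
  rw [integral_eq_zero_iff_of_nonneg_ae hp hD] at h
  filter_upwards [ha0, hb0, hz, h] with x h1 h2 h3 h4 using (aux_ptwise _ _ h1 h2 h3).2 h4

theorem aux_condProb {Ω : Type*} {m0 : MeasurableSpace Ω} (μ : Measure Ω)
    [IsProbabilityMeasure μ] (m : MeasurableSpace Ω) (hm : m ≤ m0) (C : Set Ω)
    (hC : MeasurableSet[m0] C) :
    (∀ᵐ x ∂μ, 0 ≤ condProb μ m C x) ∧ (∀ᵐ x ∂μ, condProb μ m C x ≤ 1) := by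
  have hi : Integrable (C.indicator (fun _ => (1 : ℝ))) μ := (integrable_const _).indicator hC
  constructor
  · exact condExp_nonneg (Eventually.of_forall fun x => Set.indicator_nonneg (fun _ _ => zero_le_one) x)
  · have h := condExp_mono (m := m) hi (integrable_const (1 : ℝ))
      (Eventually.of_forall fun x => Set.indicator_le_self' (fun _ _ => zero_le_one) x)
    rw [condExp_const hm] at h
    exact h

/-- If the conditional mutual information `I(ℬ; γ | 𝒜)` vanishes, then for every `C ∈ γ`
the conditional probabilities agree: `P(C | ℬ) = P(C | 𝒜)` almost everywhere. -/
theorem condProb_ae_eq_of_condMutualInfo_eq_zero {Ω : Type*} [m0 : MeasurableSpace Ω]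
    (μ : Measure Ω) [IsProbabilityMeasure μ]
    (γ : Finset (Set Ω))
    (hγmeas : ∀ C ∈ γ, MeasurableSet[m0] C)
    (hγdisj : (γ : Set (Set Ω)).PairwiseDisjoint id)
    (hγcover : ⋃₀ (γ : Set (Set Ω)) = Set.univ)
    (hγpos : ∀ C ∈ γ, 0 < μ C)
    (mA mB : MeasurableSpace Ω) (hB : mB ≤ m0) (hAB : mA ≤ mB)
    (h0 : condMutualInfo μ mA mB γ = 0) :
    ∀ C ∈ γ, condProb μ mB C =ᵐ[μ] condProb μ mA C := by
  have key : ∀ C ∈ γ, 0 ≤ ∫ ω, condProb μ mB C ω *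
        Real.log (condProb μ mB C ω / condProb μ mA C ω) ∂μ ∧
      (∫ ω, condProb μ mB C ω * Real.log (condProb μ mB C ω / condProb μ mA C ω) ∂μ = 0 →
        condProb μ mB C =ᵐ[μ] condProb μ mA C) := by
    intro C hC
    have h1 := aux_condProb μ mB hB C (hγmeas C hC)
    have h2 := aux_condProb μ mA (hAB.trans hB) C (hγmeas C hC)
    exact aux_main μ (hAB.trans hB) (condProb μ mA C) (condProb μ mB C) integrable_condExp
      (condExp_condExp_of_le hAB hB) stronglyMeasurable_condExp.measurable h1.1 h1.2 h2.1 h2.2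
  intro C hC
  exact (key C hC).2 ((Finset.sum_eq_zero_iff_of_nonneg fun D hD => (key D hD).1).1 h0 C hC)
end

section
/- Let (X_i, 𝒳_i), i ∈ N = {1,…,n}, be measurable spaces and 𝒜 a sub-σ-algebra of the product σ-algebra 𝒳_N, with reduced family 𝒜̲_M := { A ∈ 𝒳_M : (π^N_M)^{-1}(A) ∈ 𝒜 }. If 𝒜'_M (M ⊆ N) is any family of sub-σ-algebras of 𝒳_M such that 𝒜'_M ⊆ tr_M(𝒜) for all M and π^M_L is 𝒜'_M-𝒜'_L-measurable for all L ⊆ M ⊆ N, then 𝒜'_M ⊆ 𝒜̲_M for all M ⊆ N; i.e., the reduction is the largest projective family contained in the family of M-traces. -/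
/-- The canonical projection `π^M_L : X_M → X_L` between partial products, for `L ⊆ M`. -/
def proj {n : ℕ} {X : Fin n → Type*} {L M : Finset (Fin n)} (h : L ⊆ M)
    (x : ∀ i : {j : Fin n // j ∈ M}, X i.1) (i : {j : Fin n // j ∈ L}) : X i.1 :=
  x ⟨i.1, h i.2⟩

/-- The canonical projection `π^N_M : X_N → X_M` from the full product. -/
def projFull {n : ℕ} {X : Fin n → Type*} (M : Finset (Fin n))
    (x : ∀ i, X i) (i : {j : Fin n // j ∈ M}) : X i.1 :=
  x i.1

/-- The reduced σ-algebra `𝒜̲_M := { A ∈ 𝒳_M : (π^N_M)⁻¹(A) ∈ 𝒜 }`. -/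
def redFam {n : ℕ} {X : Fin n → Type*} [∀ i, MeasurableSpace (X i)]
    (𝒜 : MeasurableSpace (∀ i, X i)) (M : Finset (Fin n)) :
    MeasurableSpace (∀ i : {j : Fin n // j ∈ M}, X i.1) :=
  MeasurableSpace.pi ⊓ MeasurableSpace.map (projFull M) 𝒜

/-- Combining `x ∈ X_M` with a context configuration `x̄ ∈ X_{N∖M}` into a full
configuration in `X_N`. -/
def combine {n : ℕ} {X : Fin n → Type*} (M : Finset (Fin n))
    (x : ∀ i : {j : Fin n // j ∈ M}, X i.1)
    (y : ∀ i : {j : Fin n // j ∈ Mᶜ}, X i.1) (i : Fin n) : X i :=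
  if h : i ∈ M then x ⟨i, h⟩ else y ⟨i, Finset.mem_compl.mpr h⟩

/-- The `M`-trace `tr_M(𝒜) := ⋁_{x̄ ∈ X_{N∖M}} tr_{M,x̄}(𝒜)`, where the `(M,x̄)`-trace
`tr_{M,x̄}(𝒜)` is the σ-algebra of `(M,x̄)`-sections of members of `𝒜`, i.e. the comap of
`𝒜` under `x ↦ (x, x̄)`. -/
def traceFam {n : ℕ} {X : Fin n → Type*}
    (𝒜 : MeasurableSpace (∀ i, X i)) (M : Finset (Fin n)) :
    MeasurableSpace (∀ i : {j : Fin n // j ∈ M}, X i.1) :=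
  ⨆ y : ∀ i : {j : Fin n // j ∈ Mᶜ}, X i.1,
    MeasurableSpace.comap (fun x => combine M x y) 𝒜

theorem measurable_combine {n : ℕ} {X : Fin n → Type*} [∀ i, MeasurableSpace (X i)]
    (M : Finset (Fin n)) (y : ∀ i : {j : Fin n // j ∈ Mᶜ}, X i.1) :
    Measurable (fun x : (∀ i : {j : Fin n // j ∈ M}, X i.1) => combine M x y) := by
  refine measurable_pi_lambda _ fun i => ?_
  by_cases h : i ∈ M
  · simp only [combine, h, dite_true]
    exact measurable_pi_apply _
  · simp only [combine, h, dite_false]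
    exact measurable_const

/-- Maximality of the projective reduction: if `𝒜'_M` is any family of sub-σ-algebras
with `𝒜'_M ⊆ tr_M(𝒜)` for all `M` such that all canonical projections `π^M_L` are
`𝒜'_M`-`𝒜'_L`-measurable, then `𝒜'_M ⊆ 𝒜̲_M` for all `M`; i.e. the reduction is the
largest projective family contained in the family of `M`-traces. -/
theorem redFam_maximal {n : ℕ} {X : Fin n → Type*}
    [∀ i, MeasurableSpace (X i)] [∀ i, Nonempty (X i)]
    (𝒜 : MeasurableSpace (∀ i, X i)) (h𝒜 : 𝒜 ≤ MeasurableSpace.pi)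
    (A' : (M : Finset (Fin n)) → MeasurableSpace (∀ i : {j : Fin n // j ∈ M}, X i.1))
    (hA'trace : ∀ M, A' M ≤ traceFam 𝒜 M)
    (hA'proj : ∀ (L M : Finset (Fin n)) (h : L ⊆ M),
      @Measurable _ _ (A' M) (A' L) (proj h)) :
    ∀ M, A' M ≤ redFam 𝒜 M := by
  intro M
  refine le_inf ?_ ?_
  · refine (hA'trace M).trans (iSup_le fun y => ?_)
    refine (MeasurableSpace.comap_mono h𝒜).trans ?_
    exact Measurable.comap_le (measurable_combine M y)
  · intro s hs
    have h1 := hA'trace _ _ (hA'proj M Finset.univ (Finset.subset_univ M) hs)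
    have h2 : traceFam 𝒜 Finset.univ ≤ MeasurableSpace.map (projFull Finset.univ) 𝒜 := by
      refine iSup_le fun y => ?_
      rintro t ⟨u, hu, rfl⟩
      have h3 : projFull Finset.univ ⁻¹' ((fun x => combine Finset.univ x y) ⁻¹' u) = u := by
        ext x
        have h4 : combine Finset.univ (projFull Finset.univ x) y = x := by
          funext i
          simp [combine, projFull]
        simp only [Set.mem_preimage, h4]
      change @MeasurableSet _ 𝒜 _
      rw [h3]
      exact hu
    exact h2 _ h1
end

section
/- Let 𝖷, 𝖸, 𝖹 be finite sets, p a probability distribution on 𝖷 × 𝖸 × 𝖹 with p(z) > 0 for all z, and α a partition of 𝖷 with p(A) > 0 for every block A ∈ α. For x ∈ 𝖷, let A_x be the block of α containing x, and define p̂(z|x) := ∑_{x' ∈ A_x} p(x'|A_x) p(z|x') (where p(z|x') is the conditional of z given x', and the inner conditionals are assumed well defined, i.e. p(x) > 0 and p(x,y) > 0 on the support). Then the chain rule holds: ∑_{x,y,z} p(x,y,z) log( p(z|x,y)/p(z) ) = ∑_{x} p(x) ∑_{z} p̂(z|x) log( p̂(z|x)/p(z) ) + ∑_{x,y} p(x,y)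 ∑_{z} p(z|x,y) log( p(z|x,y)/p̂(z|x) ), i.e., I(X,Y;Z) = I(X→Z) + I(Y→Z|X), with the convention 0·log 0 = 0. -/
open Finset

variable {X Y Z : Type*}

/-- Marginal `p(x)`. -/
def pX [Fintype Y] [Fintype Z] (p : X → Y → Z → ℝ) (x : X) : ℝ := ∑ y, ∑ z, p x y z

/-- Marginal `p(x,y)`. -/
def pXY [Fintype Z] (p : X → Y → Z → ℝ) (x : X) (y : Y) : ℝ := ∑ z, p x y z

/-- Marginal `p(z)`. -/
def pZ [Fintype X] [Fintype Y] (p : X → Y → Z → ℝ) (z : Z) : ℝ := ∑ x, ∑ y, p x y z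

/-- Conditional `p(z|x,y) = p(x,y,z)/p(x,y)`. -/
noncomputable def pZXY [Fintype Z] (p : X → Y → Z → ℝ) (x : X) (y : Y) (z : Z) : ℝ :=
  p x y z / pXY p x y

/-- Conditional `p(z|x) = ∑_y p(y|x) p(z|x,y)`. -/
noncomputable def pZX [Fintype Y] [Fintype Z] (p : X → Y → Z → ℝ) (x : X) (z : Z) : ℝ :=
  ∑ y, (pXY p x y / pX p x) * pZXY p x y z

/-- Probability `p(A_x)` of the block of the partition `α` containing `x`, where
`A : X → Finset X` sends each point to its block. -/
def pBlock [Fintype Y] [Fintype Z] (p : X → Y → Z → ℝ) (A : X → Finset X) (x : X) : ℝ :=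
  ∑ x' ∈ A x, pX p x'

/-- The coarsened conditional `p̂(z|x) := ∑_{x' ∈ A_x} p(x'|A_x) p(z|x')`. -/
noncomputable def pHat [Fintype Y] [Fintype Z] (p : X → Y → Z → ℝ) (A : X → Finset X)
    (x : X) (z : Z) : ℝ :=
  ∑ x' ∈ A x, (pX p x' / pBlock p A x) * pZX p x' z

theorem pHat_eq_aux [Fintype Y] [Fintype Z] (p : X → Y → Z → ℝ) (A : X → Finset X)
    (hpx : ∀ x, 0 < pX p x) (hpxy : ∀ x y, 0 < pXY p x y) (x : X) (z : Z) :
    pHat p A x z = ∑ x' ∈ A x, (∑ y, p x' y z) / pBlock p A x := by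
  unfold pHat
  refine Finset.sum_congr rfl fun x' _ => ?_
  have h : pZX p x' z = (∑ y, p x' y z) / pX p x' := by
    unfold pZX pZXY
    rw [Finset.sum_div]
    refine Finset.sum_congr rfl fun y _ => ?_
    have h1 := (hpx x').ne'
    have h2 := (hpxy x' y).ne'
    field_simp
  rw [h]
  have h1 := (hpx x').ne'
  field_simp

/-- Causal chain rule in the finite two-input case: for a joint distribution `p` on
`𝖷 × 𝖸 × 𝖹` and a partition `α` of `𝖷` (given by its block map `A`), one has
`I(X,Y;Z) = I(X→Z) + I(Y→Z|X)`, i.e.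
`∑_{x,y,z} p(x,y,z) log(p(z|x,y)/p(z))
  = ∑_x p(x) ∑_z p̂(z|x) log(p̂(z|x)/p(z))
    + ∑_{x,y} p(x,y) ∑_z p(z|x,y) log(p(z|x,y)/p̂(z|x))`
(with the convention `0 · log 0 = 0`; in Lean `log 0 = 0` and `r / 0 = 0`). -/
theorem causal_chain_rule_two_inputs
    [Fintype X] [Fintype Y] [Fintype Z] [DecidableEq X]
    (p : X → Y → Z → ℝ)
    (hp0 : ∀ x y z, 0 ≤ p x y z)
    (hp1 : ∑ x, ∑ y, ∑ z, p x y z = 1)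
    (A : X → Finset X)
    (hA_mem : ∀ x, x ∈ A x)
    (hA_part : ∀ x x', x' ∈ A x → A x' = A x)
    (hpz : ∀ z, 0 < pZ p z)
    (hpx : ∀ x, 0 < pX p x)
    (hpxy : ∀ x y, 0 < pXY p x y)
    (hpA : ∀ x, 0 < pBlock p A x) :
    ∑ x, ∑ y, ∑ z, p x y z * Real.log (pZXY p x y z / pZ p z)
      = (∑ x, pX p x * ∑ z, pHat p A x z * Real.log (pHat p A x z / pZ p z))
        + ∑ x, ∑ y, pXY p x y *
            ∑ z, pZXY p x y z * Real.log (pZXY p x y z / pHat p A x z) := by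
  have hmem : ∀ x x', x' ∈ A x ↔ x ∈ A x' := fun x x' =>
    ⟨fun h => by rw [hA_part x x' h]; exact hA_mem x,
     fun h => by rw [hA_part x' x h]; exact hA_mem x'⟩
  have hB : ∀ x x', x' ∈ A x → pBlock p A x' = pBlock p A x := fun x x' h => by
    unfold pBlock; rw [hA_part x x' h]
  have hH : ∀ x x' z, x' ∈ A x → pHat p A x' z = pHat p A x z := fun x x' z h => by
    unfold pHat; rw [hB x x' h, hA_part x x' h]
  have hkey : ∀ z, ∑ x, pX p x * (pHat p A x z * Real.log (pHat p A x z / pZ p z))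
      = ∑ x, ∑ y, p x y z * Real.log (pHat p A x z / pZ p z) := by
    intro z
    have e1 : ∀ x, pX p x * (pHat p A x z * Real.log (pHat p A x z / pZ p z))
        = ∑ x' ∈ A x, pX p x * ((∑ y, p x' y z) / pBlock p A x'
            * Real.log (pHat p A x' z / pZ p z)) := by
      intro x
      conv_lhs => rw [← mul_assoc, mul_comm (pX p x), mul_assoc]
      conv_lhs => arg 1; rw [pHat_eq_aux p A hpx hpxy]
      rw [Finset.sum_mul]
      refine Finset.sum_congr rfl fun x' h => ?_
      rw [hB x x' h, hH x x' z h]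
      ring
    rw [Finset.sum_congr rfl fun x _ => e1 x]
    rw [Finset.sum_comm' (t' := Finset.univ) (s' := A)
      (by intro x y; simp only [Finset.mem_univ, true_and, and_true]; exact hmem x y)]
    refine Finset.sum_congr rfl fun x' _ => ?_
    rw [← Finset.sum_mul, ← Finset.sum_mul]
    change pBlock p A x' * _ = _
    have := (hpA x').ne'
    field_simp
  have hfirst : (∑ x, pX p x * ∑ z, pHat p A x z * Real.log (pHat p A x z / pZ p z))
      = ∑ x, ∑ y, ∑ z, p x y z * Real.log (pHat p A x z / pZ p z) := by
    simp_rw [Finset.mul_sum]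
    rw [Finset.sum_comm, Finset.sum_congr rfl fun z _ => hkey z, Finset.sum_comm]
    exact Finset.sum_congr rfl fun x _ => Finset.sum_comm
  rw [hfirst, ← Finset.sum_add_distrib]
  refine Finset.sum_congr rfl fun x _ => ?_
  rw [← Finset.sum_add_distrib]
  refine Finset.sum_congr rfl fun y _ => ?_
  rw [Finset.mul_sum, ← Finset.sum_add_distrib]
  refine Finset.sum_congr rfl fun z _ => ?_
  have hxy := hpxy x y
  have hm : pXY p x y * (pZXY p x y z * Real.log (pZXY p x y z / pHat p A x z))
      = p x y z * Real.log (pZXY p x y z / pHat p A x z) := by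
    rw [← mul_assoc]
    congr 1
    unfold pZXY
    field_simp
  rw [hm]
  rcases (hp0 x y z).eq_or_lt with h0 | h0
  · simp [← h0]
  · have hc : 0 < pZXY p x y z := div_pos h0 hxy
    have hq : 0 < ∑ y, p x y z :=
      Finset.sum_pos' (fun y _ => hp0 x y z) ⟨y, Finset.mem_univ y, h0⟩
    have hh : 0 < pHat p A x z := by
      rw [pHat_eq_aux p A hpx hpxy]
      exact Finset.sum_pos'
        (fun x' _ => div_nonneg (Finset.sum_nonneg fun y _ => hp0 x' y z) (hpA x).le)
        ⟨x, hA_mem x, div_pos hq (hpA x)⟩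
    rw [Real.log_div hc.ne' (hpz z).ne', Real.log_div hh.ne' (hpz z).ne',
      Real.log_div hc.ne' hh.ne']
    ring
end

section
/- Let 𝖷, 𝖸, 𝖹 be finite sets, p a probability distribution on 𝖷 × 𝖸 × 𝖹 with p(z) > 0 for all z and p(x,y) > 0 on the support, and α a partition of 𝖷 with p(A) > 0 for every block. With the coarsened conditional p̂(z|x) := ∑_{x' ∈ A_x} p(x'|A_x) p(z|x'), the following inequalities hold: I(X→Z) := ∑_x p(x) ∑_z p̂(z|x) log(p̂(z|x)/p(z)) ≤ I(X;Z) := ∑_x p(x) ∑_z p(z|x) log(p(z|x)/p(z)), and I(Y→Z|X) := ∑_{x,y} p(x,y) ∑_z p(z|x,y) log(p(z|x,y)/p̂(z|x)) ≥ I(Y;Z|X) := ∑_{x,y} p(x,y) ∑_z p(z|x,y) log(p(z|x,y)/p(z|x)), with the convention 0·log 0 = 0. -/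
open Finset

variable {X Y Z : Type*}

lemma aux_swap [Fintype X] [DecidableEq X] (w : X → ℝ) (A : X → Finset X)
    (hA_mem : ∀ x, x ∈ A x)
    (hA_part : ∀ x x', x' ∈ A x → A x' = A x)
    (hB : ∀ x, 0 < ∑ x' ∈ A x, w x') (f F : X → ℝ)
    (hF : ∀ x x', x' ∈ A x → F x' = F x) :
    ∑ x, w x * (∑ x' ∈ A x, (w x' / ∑ u ∈ A x, w u) * f x') * F x
      = ∑ x, w x * f x * F x := by
  have hsymm : ∀ x x', x' ∈ A x ↔ x ∈ A x' := by
    intro x x'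
    constructor
    · intro h
      rw [hA_part x x' h]
      exact hA_mem x
    · intro h
      rw [hA_part x' x h]
      exact hA_mem x'
  have h1 : ∀ x, w x * (∑ x' ∈ A x, (w x' / ∑ u ∈ A x, w u) * f x') * F x
      = ∑ x' ∈ A x, w x * ((w x' / ∑ u ∈ A x, w u) * f x') * F x := by
    intro x
    rw [Finset.mul_sum, Finset.sum_mul]
  rw [Finset.sum_congr rfl (fun x _ => h1 x)]
  rw [Finset.sum_comm' (t' := Finset.univ) (s' := A)
    (by intro x y; simpa using hsymm x y)]
  refine Finset.sum_congr rfl fun y _ => ?_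
  have h2 : ∀ x ∈ A y, w x * ((w y / ∑ u ∈ A x, w u) * f y) * F x
      = w x * ((w y / ∑ u ∈ A y, w u) * f y * F y) := by
    intro x hx
    rw [hA_part y x hx, hF y x hx]
    ring
  rw [Finset.sum_congr rfl h2, ← Finset.sum_mul]
  have := (hB y).ne'
  field_simp

lemma aux_log (f g : ℝ) (hf : 0 ≤ f) (hfg : 0 < f → 0 < g) (hg : 0 ≤ g) :
    f - g ≤ f * (Real.log f - Real.log g) := by
  rcases hf.eq_or_lt with h | h
  · rw [← h]
    simpa using hg
  · have hg' := hfg h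
    have h1 := Real.log_le_sub_one_of_pos (div_pos hg' h)
    rw [Real.log_div hg'.ne' h.ne'] at h1
    have h2 : f * (Real.log g - Real.log f) ≤ f * (g / f - 1) :=
      mul_le_mul_of_nonneg_left h1 h.le
    have h3 : f * (g / f - 1) = g - f := by field_simp
    linarith

/-- Comparison of the causal information flows with the classical (conditional) mutual
information in the finite two-input case:
`I(X→Z) = ∑_x p(x) ∑_z p̂(z|x) log(p̂(z|x)/p(z)) ≤ I(X;Z) = ∑_x p(x) ∑_z p(z|x) log(p(z|x)/p(z))`
and
`I(Y→Z|X) = ∑_{x,y} p(x,y) ∑_z p(z|x,y) log(p(z|x,y)/p̂(z|x))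
  ≥ I(Y;Z|X) = ∑_{x,y} p(x,y) ∑_z p(z|x,y) log(p(z|x,y)/p(z|x))`
(with the convention `0 · log 0 = 0`; in Lean `log 0 = 0` and `r / 0 = 0`). -/
theorem causal_information_flow_comparison
    [Fintype X] [Fintype Y] [Fintype Z] [DecidableEq X]
    (p : X → Y → Z → ℝ)
    (hp0 : ∀ x y z, 0 ≤ p x y z)
    (hp1 : ∑ x, ∑ y, ∑ z, p x y z = 1)
    (A : X → Finset X)
    (hA_mem : ∀ x, x ∈ A x)
    (hA_part : ∀ x x', x' ∈ A x → A x' = A x)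
    (hpz : ∀ z, 0 < pZ p z)
    (hpx : ∀ x, 0 < pX p x)
    (hpxy : ∀ x y, 0 < pXY p x y)
    (hpA : ∀ x, 0 < pBlock p A x) :
    ((∑ x, pX p x * ∑ z, pHat p A x z * Real.log (pHat p A x z / pZ p z))
        ≤ ∑ x, pX p x * ∑ z, pZX p x z * Real.log (pZX p x z / pZ p z))
    ∧ ((∑ x, ∑ y, pXY p x y *
            ∑ z, pZXY p x y z * Real.log (pZXY p x y z / pHat p A x z))
        ≥ ∑ x, ∑ y, pXY p x y *
            ∑ z, pZXY p x y z * Real.log (pZXY p x y z / pZX p x z)) := by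
  have hmul : ∀ x z, pX p x * pZX p x z = ∑ y, p x y z := by
    intro x z
    unfold pZX pZXY
    rw [Finset.mul_sum]
    refine Finset.sum_congr rfl fun y _ => ?_
    have h1 := (hpx x).ne'
    have h2 := (hpxy x y).ne'
    field_simp
  have hmul2 : ∀ x y z, pXY p x y * pZXY p x y z = p x y z := by
    intro x y z
    unfold pZXY
    have h2 := (hpxy x y).ne'
    field_simp
  have hf0 : ∀ x z, 0 ≤ pZX p x z := by
    intro x z
    refine Finset.sum_nonneg fun y _ => mul_nonneg (div_nonneg (hpxy x y).le (hpx x).le) ?_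
    exact div_nonneg (hp0 x y z) (hpxy x y).le
  have hg0 : ∀ x z, 0 ≤ pHat p A x z := fun x z =>
    Finset.sum_nonneg fun y _ => mul_nonneg (div_nonneg (hpx y).le (hpA x).le) (hf0 y z)
  have hfg : ∀ x z, 0 < pZX p x z → 0 < pHat p A x z := by
    intro x z h
    refine lt_of_lt_of_le (mul_pos (div_pos (hpx x) (hpA x)) h) ?_
    exact Finset.single_le_sum (f := fun x' => pX p x' / pBlock p A x * pZX p x' z)
      (fun y _ => mul_nonneg (div_nonneg (hpx y).le (hpA x).le) (hf0 y z)) (hA_mem x)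
  have hpf : ∀ x y z, 0 < p x y z → 0 < pZX p x z := by
    intro x y z h
    have h1 : p x y z ≤ ∑ y, p x y z :=
      Finset.single_le_sum (f := fun y => p x y z) (fun y _ => hp0 x y z) (Finset.mem_univ y)
    rw [← hmul] at h1
    exact pos_of_mul_pos_right (h.trans_le h1) (hpx x).le
  have hgc : ∀ z x x', x' ∈ A x → pHat p A x' z = pHat p A x z := by
    intro z x x' h
    unfold pHat pBlock
    rw [hA_part x x' h]
  have hswap : ∀ z (F : X → ℝ), (∀ x x', x' ∈ A x → F x' = F x) →
      ∑ x, pX p x * pHat p A x z * F x = ∑ x, pX p x * pZX p x z * F x := fun z F hF =>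
    aux_swap (pX p) A hA_mem hA_part hpA (fun x => pZX p x z) F hF
  have key : 0 ≤ ∑ z, ∑ x, pX p x * pZX p x z *
      (Real.log (pZX p x z) - Real.log (pHat p A x z)) := by
    refine Finset.sum_nonneg fun z _ => ?_
    have h1 := hswap z (fun _ => 1) (fun _ _ _ => rfl)
    have h2 : ∑ x, pX p x * (pZX p x z - pHat p A x z) ≤ ∑ x, pX p x * pZX p x z *
        (Real.log (pZX p x z) - Real.log (pHat p A x z)) := by
      refine Finset.sum_le_sum fun x _ => ?_
      rw [mul_assoc]
      exact mul_le_mul_of_nonneg_left (aux_log _ _ (hf0 x z) (hfg x z) (hg0 x z)) (hpx x).le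
    simp only [mul_sub, Finset.sum_sub_distrib, mul_one] at h1 h2 ⊢
    linarith
  constructor
  · rw [← sub_nonneg]
    convert key using 1
    simp only [Finset.mul_sum, ← mul_assoc]
    rw [Finset.sum_comm, Finset.sum_comm (γ := X), ← Finset.sum_sub_distrib]
    refine Finset.sum_congr rfl fun z _ => ?_
    rw [hswap z (fun x => Real.log (pHat p A x z / pZ p z))
      (fun x x' h => by simp only [hgc z x x' h]), ← Finset.sum_sub_distrib]
    refine Finset.sum_congr rfl fun x _ => ?_
    rcases (hf0 x z).eq_or_lt with h | h
    · rw [← h]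
      simp
    · rw [Real.log_div h.ne' (hpz z).ne', Real.log_div (hfg x z h).ne' (hpz z).ne']
      ring
  · rw [ge_iff_le, ← sub_nonneg]
    convert key using 1
    rw [Finset.sum_comm (s := (Finset.univ : Finset Z)), ← Finset.sum_sub_distrib]
    refine Finset.sum_congr rfl fun x _ => ?_
    simp only [Finset.mul_sum, ← mul_assoc, hmul2, hmul]
    simp only [Finset.sum_mul]
    rw [Finset.sum_comm (s := (Finset.univ : Finset Z)), ← Finset.sum_sub_distrib]
    refine Finset.sum_congr rfl fun y _ => ?_
    rw [← Finset.sum_sub_distrib]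
    refine Finset.sum_congr rfl fun z _ => ?_
    rcases (hp0 x y z).eq_or_lt with h | h
    · rw [← h]
      simp
    · have hr : 0 < pZXY p x y z := div_pos h (hpxy x y)
      have hf := hpf x y z h
      rw [Real.log_div hr.ne' hf.ne', Real.log_div hr.ne' (hfg x z hf).ne']
      ring
end

section
/- Consider the Markov transition kernel on {±1}² given by p(x',y' | x,y) = p(x'|x,y) · p(y'|x,y) with p(x'|x,y) = 1/(1 + e^{2βx'y}) and p(y'|x,y) = 1/(1 + e^{2βy'y}), for a real parameter β. Set a = 1/(1+e^{2β}) and b = 1/(1+e^{−2β}). Then the probability distribution π on {±1}² given by π(+1,+1) = π(−1,−1) = 1/2 − ab and π(+1,−1) = π(−1,+1) = ab is stationary for this kernel; i.e., ∑_{(x,y)} π(x,y) p(x',y'|x,y) = π(x',y') for all (x',y') ∈ {±1}². -/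
open Finset

/-- For the Markov transition kernel on `{±1}²` given by
`p(x',y'|x,y) = p(x'|x,y) · p(y'|x,y)` with `p(x'|x,y) = 1/(1+e^{2βx'y})` and
`p(y'|x,y) = 1/(1+e^{2βy'y})`, the distribution `π` with
`π(+1,+1) = π(−1,−1) = 1/2 − ab` and `π(+1,−1) = π(−1,+1) = ab`, where
`a = 1/(1+e^{2β})` and `b = 1/(1+e^{−2β})`, is stationary:
`∑_{(x,y)} π(x,y) p(x',y'|x,y) = π(x',y')` for all `(x',y') ∈ {±1}²`. -/
theorem stationary_distribution_copy_chain (β : ℝ)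
    (S : Finset ℤ) (hS : S = {-1, 1})
    (a b : ℝ)
    (ha : a = 1 / (1 + Real.exp (2 * β)))
    (hb : b = 1 / (1 + Real.exp (-(2 * β))))
    (w : ℤ → ℤ → ℝ)
    (hw : ∀ x y, w x y = if x = y then 1 / 2 - a * b else a * b) :
    ∀ x' ∈ S, ∀ y' ∈ S,
      (∑ x ∈ S, ∑ y ∈ S, w x y *
          ((1 / (1 + Real.exp (2 * β * (x' : ℝ) * (y : ℝ)))) *
            (1 / (1 + Real.exp (2 * β * (y' : ℝ) * (y : ℝ))))))
        = w x' y' := by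
  have hab : a + b = 1 := by
    rw [ha, hb, Real.exp_neg]
    have h := Real.exp_pos (2 * β)
    field_simp
    ring
  have key : ∀ u v : ℤ, u ∈ S → v ∈ S →
      1 / (1 + Real.exp (2 * β * (u : ℝ) * (v : ℝ))) = if u = v then a else b := by
    intro u v hu hv
    rw [hS] at hu hv
    simp only [Finset.mem_insert, Finset.mem_singleton] at hu hv
    rcases hu with rfl | rfl <;> rcases hv with rfl | rfl <;> norm_num [ha, hb]
  intro x' hx y' hy
  have e : (∑ x ∈ S, ∑ y ∈ S, w x y *
          ((1 / (1 + Real.exp (2 * β * (x' : ℝ) * (y : ℝ)))) *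
            (1 / (1 + Real.exp (2 * β * (y' : ℝ) * (y : ℝ))))))
      = ∑ x ∈ S, ∑ y ∈ S, (if x = y then 1 / 2 - a * b else a * b) *
          ((if x' = y then a else b) * (if y' = y then a else b)) := by
    refine Finset.sum_congr rfl fun x _ => Finset.sum_congr rfl fun y hyS => ?_
    rw [key x' y hx hyS, key y' y hy hyS, hw]
  rw [e, hw]
  have hb' : b = 1 - a := by linarith
  clear e key ha hb hw hab
  subst hS hb'
  simp only [Finset.mem_insert, Finset.mem_singleton] at hx hy
  have hne : (-1 : ℤ) ∉ ({1} : Finset ℤ) := by decide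
  rw [Finset.sum_insert hne]
  simp only [Finset.sum_insert hne, Finset.sum_singleton]
  rcases hx with rfl | rfl <;> rcases hy with rfl | rfl <;> norm_num <;> ring
end
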